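/- (Unachievable landmarks propagate to more concrete models.) Let M be a STRIPS planning model over fluents F, P ⊆ F, and φ : Set F → Prop. If no plan that is executable from I \ P in the projection f_P(M) ends in a state satisfying φ, then no plan that is executable from I in M ends in a state S with φ(S \ P). -/

import Mathlib

/-- A STRIPS planning model over fluents `F` and action labels `A`. -/
structure Strips (F : Type*) (A : Type*) where
  prec : A → Set F
  add : A → Set F
  del : A → Set F
  I : Set F
  G : Set F

/-- Result of applying action `a` in state `S`. -/
def Strips.res {F A : Type*} (M : Strips F A) (a : A) (S : Set F) : Set F :=
  (S \ M.del a) ∪ M.add a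

/-- The state trajectory `S₀, S₁, …, Sₙ` of a plan from a state. -/
def Strips.traj {F A : Type*} (M : Strips F A) : List A → Set F → List (Set F)
  | [], S => [S]
  | a :: π, S => S :: M.traj π (M.res a S)

/-- A plan is executable from `S` if each action's precondition holds when applied. -/
def Strips.exec {F A : Type*} (M : Strips F A) : List A → Set F → Prop
  | [], _ => True
  | a :: π, S => M.prec a ⊆ S ∧ M.exec π (M.res a S)

/-- The final state `Sₙ` of the trajectory of a plan from a state. -/
def Strips.finalState {F A : Type*} (M : Strips F A) (π : List A) (S : Set F) : Set F :=
  π.foldl (fun T a => M.res a T) S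

/-- The state `S_k` of the trajectory of a plan from a state. -/
def Strips.stateAt {F A : Type*} (M : Strips F A) (π : List A) (S : Set F) (k : ℕ) : Set F :=
  M.finalState (π.take k) S

/-- A plan is valid if it is executable from the initial state and achieves the goal. -/
def Strips.Valid {F A : Type*} (M : Strips F A) (π : List A) : Prop :=
  M.exec π M.I ∧ M.G ⊆ M.finalState π M.I

/-- The set `Π_M` of valid plans of `M`. -/
def Strips.Plans {F A : Type*} (M : Strips F A) : Set (List A) :=
  {π | M.Valid π}

/-- The projection `f_P(M)` of a model, projecting out the fluents in `P`. -/
def Strips.proj {F A : Type*} (M : Strips F A) (P : Set F) : Strips F A where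
  prec a := M.prec a \ P
  add a := M.add a \ P
  del a := M.del a \ P
  I := M.I \ P
  G := M.G \ P

theorem proj_res_eq {F A : Type*} (M : Strips F A) (P : Set F) (a : A) (S : Set F) :
    (M.proj P).res a (S \ P) = M.res a S \ P := by
  ext x
  simp only [Strips.res, Strips.proj, Set.mem_union, Set.mem_diff]
  tauto

theorem proj_exec_final {F A : Type*} (M : Strips F A) (P : Set F) (π : List A) :
    ∀ S : Set F, M.exec π S → (M.proj P).exec π (S \ P) ∧
      (M.proj P).finalState π (S \ P) = M.finalState π S \ P := by
  induction π with
  | nil => intro S _; exact ⟨trivial, rfl⟩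
  | cons a π ih =>
    intro S hS
    obtain ⟨h1, h2⟩ := hS
    obtain ⟨h3, h4⟩ := ih _ h2
    rw [← proj_res_eq] at h3 h4
    exact ⟨⟨Set.diff_subset_diff_left h1, h3⟩, h4⟩

theorem stmt11 {F A : Type*} (M : Strips F A) (P : Set F) (φ : Set F → Prop)
    (h : ∀ π : List A, (M.proj P).exec π (M.I \ P) →
           ¬ φ ((M.proj P).finalState π (M.I \ P))) :
    ∀ π : List A, M.exec π M.I → ¬ φ (M.finalState π M.I \ P) := by
  intro π hπ
  obtain ⟨h1, h2⟩ := proj_exec_final M P π M.I hπ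
  rw [← h2]
  exact h π h1
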